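/- Lemma 4.4 (block structure of Ḟ_𝔥 and the O'Neill matrix): In the reduction setting, let P_𝔥(t), P_𝔳(t) be the projections onto 𝔥(t) and 𝔳(t) associated with V = 𝔥(t) ⊕ 𝔳(t) ⊕ h(t), and set F_𝔥(t) = P_𝔥(t)∘F(t). Then t ↦ F_𝔥(t) is smooth, and in the basis (a_1(t),…,a_n(t),H_1(t),…,H_n(t)) of V the matrix of its derivative Ḟ_𝔥(t) has the block form [[−C₁(t), C₂(t)],[O, C₁(t)]], where C₁(t) is the matrix of P_𝔥(t)|_{ℓ(t)} in the basis (a_i(t)); explicitly, Ḟ_𝔥(t)a_j(t) = −P_𝔥(t)a_j(t) and Ḟ_𝔥(t)H_j(t) = Σ_i a_i(t)(C₂(t))_{ij} + Σ_i H_i(t)(C₁(t))_{ij} for some n×n matrix C₂(t). Moreover: (1) C₂(t)·W(t)^{-1} is a symmetric matrix; (2) Σ_i a_i(t)(C₂(t))_{ij} = P_𝔳(t)ȧ_j(t) for j ≤ k and Σ_i a_i(t)(C₂(t))_{ij} = −P_𝔥(t)ȧ_j(t) for j > k. -/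

import Mathlib

/-- The symplectic orthogonal `S^ω = {u : ω(u, s) = 0 for all s ∈ S}` of a subspace. -/
def sympOrtho {V : Type*} [AddCommGroup V] [Module ℝ V]
    (ω : V →ₗ[ℝ] V →ₗ[ℝ] ℝ) (S : Submodule ℝ V) : Submodule ℝ V where
  carrier := {u | ∀ s ∈ S, ω u s = 0}
  add_mem' := fun ha hb s hs => by
    simp only [map_add, LinearMap.add_apply, ha s hs, hb s hs, add_zero]
  zero_mem' := fun s hs => by simp
  smul_mem' := fun c a ha s hs => by
    simp only [map_smul, LinearMap.smul_apply, ha s hs, smul_zero]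

theorem aux_ext {V : Type*} [NormedAddCommGroup V] [NormedSpace ℝ V] {M : Type*} [AddCommGroup M]
    [Module ℝ M] {n : ℕ} {a b : Fin n → V}
    (h : Submodule.span ℝ (Set.range (Sum.elim a b)) = ⊤) (f g : V →ₗ[ℝ] M)
    (h1 : ∀ i, f (a i) = g (a i)) (h2 : ∀ i, f (b i) = g (b i)) (v : V) : f v = g v := by
  have : f = g := by
    apply LinearMap.ext_on_range h
    rintro (i | i)
    · exact h1 i
    · exact h2 i
  rw [this]

theorem aux_diff {V : Type*} [NormedAddCommGroup V] [NormedSpace ℝ V] [FiniteDimensional ℝ V]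
    {n : ℕ} (k : ℕ) (A A' A'' : ℝ → Fin n → V)
    (hA' : ∀ i t, HasDerivAt (fun s => A s i) (A' t i) t)
    (hA'' : ∀ i t, HasDerivAt (fun s => A' s i) (A'' t i) t)
    (hfan : ∀ t, LinearIndependent ℝ (Sum.elim (A t) (A' t)) ∧
      Submodule.span ℝ (Set.range (Sum.elim (A t) (A' t))) = ⊤)
    (G : ℝ → V →L[ℝ] V) (hG0 : ∀ t i, G t (A t i) = 0)
    (hG1 : ∀ t i, G t (A' t i) = if (i : ℕ) < k then A t i else 0) :
    Differentiable ℝ G := by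
  let E := (Fin n ⊕ Fin n) → ℝ
  let p : (Fin n ⊕ Fin n) → E →L[ℝ] ℝ := fun i => ContinuousLinearMap.proj i
  let B : ℝ → E →L[ℝ] V := fun t =>
    (∑ i, (p (Sum.inl i)).smulRight (A t i)) + ∑ i, (p (Sum.inr i)).smulRight (A' t i)
  let K : ℝ → E →L[ℝ] V := fun t =>
    ∑ i : Fin n, (p (Sum.inr i)).smulRight (if (i : ℕ) < k then A t i else 0)
  have hdA : ∀ i, Differentiable ℝ (fun t => A t i) := fun i t => (hA' i t).differentiableAt
  have hdA' : ∀ i, Differentiable ℝ (fun t => A' t i) := fun i t => (hA'' i t).differentiableAt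
  have hsm : ∀ (q : E →L[ℝ] ℝ) (f : ℝ → V), Differentiable ℝ f →
      Differentiable ℝ (fun t => q.smulRight (f t)) := by
    intro q f hf
    exact (ContinuousLinearMap.smulRightL ℝ E V q).differentiable.comp hf
  have hB : Differentiable ℝ B := by
    apply Differentiable.add
    · exact Differentiable.fun_sum fun i _ => hsm _ _ (hdA i)
    · exact Differentiable.fun_sum fun i _ => hsm _ _ (hdA' i)
  have hK : Differentiable ℝ K := by
    apply Differentiable.fun_sum
    intro i _
    apply hsm
    by_cases h : (i : ℕ) < k
    · simpa [h] using hdA i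
    · simp [h]
  have hinv : ∀ t, ∃ e : E ≃L[ℝ] V, (e : E →L[ℝ] V) = B t := by
    intro t
    let b := Module.Basis.mk (hfan t).1 (hfan t).2.ge
    refine ⟨b.equivFun.symm.toContinuousLinearEquiv, ?_⟩
    apply ContinuousLinearMap.ext
    intro x
    have h1 : b.equivFun.symm x = ∑ i, x i • b i := Module.Basis.equivFun_symm_apply b x
    change b.equivFun.symm x = _
    rw [h1, Fintype.sum_sum_type]
    simp only [b, Module.Basis.mk_apply, B, Sum.elim_inl, Sum.elim_inr,
      ContinuousLinearMap.add_apply, ContinuousLinearMap.sum_apply,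
      ContinuousLinearMap.smulRight_apply]
    rfl
  have hcomp : ∀ t, (G t).comp (B t) = K t := by
    intro t
    apply ContinuousLinearMap.ext
    intro x
    simp [B, K, map_sum, hG0, hG1]
  have hGe : G = fun t => (K t).comp (ContinuousLinearMap.inverse (B t)) := by
    funext t
    obtain ⟨e, he⟩ := hinv t
    rw [← hcomp, ← he, ContinuousLinearMap.inverse_equiv]
    ext x
    simp
  rw [hGe]
  apply Differentiable.clm_comp hK
  intro t
  obtain ⟨e, he⟩ := hinv t
  have h1 : DifferentiableAt ℝ (ContinuousLinearMap.inverse : (E →L[ℝ] V) → _) (B t) := by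
    rw [← he]
    exact (contDiffAt_map_inverse (n := 1) e).differentiableAt (by simp)
  exact h1.comp t (hB t)

/-- **Lemma 4.4.**  In the reduction setting, with `P_𝔥(t)`, `P_𝔳(t)` the projections
associated with `V = 𝔥(t) ⊕ 𝔳(t) ⊕ h(t)` and `F_𝔥(t) = P_𝔥(t)∘F(t)`, the curve
`t ↦ F_𝔥(t)` is differentiable and, in the basis `(a_i(t), H_i(t))`, its derivative has
the block form `[[−C₁(t), C₂(t)], [O, C₁(t)]]`, where `C₁(t)` is the matrix of
`P_𝔥(t)|_{ℓ(t)}`.  Moreover `C₂(t)·W(t)⁻¹` is symmetric, and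
`Σ_i a_i(t)(C₂(t))_{ij} = P_𝔳(t) ȧ_j(t)` for `j ≤ k`, `= −P_𝔥(t) ȧ_j(t)` for `j > k`. -/
theorem lemma4_4_oneill_matrix
    {V : Type*} [NormedAddCommGroup V] [NormedSpace ℝ V] [FiniteDimensional ℝ V]
    {n : ℕ} (hn : 0 < n) (hdim : Module.finrank ℝ V = 2 * n)
    (ω : V →ₗ[ℝ] V →ₗ[ℝ] ℝ)
    (halt : ∀ v, ω v v = 0)
    (hnd : ∀ v, (∀ w, ω v w = 0) → v = 0)
    (A A' : ℝ → Fin n → V)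
    (hA : ∀ i, ContDiff ℝ (⊤ : ℕ∞) (fun t => A t i))
    (hA' : ∀ i t, HasDerivAt (fun s => A s i) (A' t i) t)
    (hfan : ∀ t, LinearIndependent ℝ (Sum.elim (A t) (A' t)) ∧
      Submodule.span ℝ (Set.range (Sum.elim (A t) (A' t))) = ⊤)
    (hLag : ∀ t i j, ω (A t i) (A t j) = 0)
    (F F' : ℝ → V →L[ℝ] V)
    (hF0 : ∀ t i, F t (A t i) = 0)
    (hF1 : ∀ t i, F t (A' t i) = A t i)
    (hFd : ∀ t, HasDerivAt F (F' t) t)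
    (H : ℝ → Fin n → V)
    (hH : ∀ t j, H t j = (1/2 : ℝ) • (A' t j + F' t (A' t j)))
    -- the reduction setting
    (Wsub : Submodule ℝ V)
    (hco : sympOrtho ω Wsub ≤ Wsub)
    (k : ℕ) (hkn : k ≤ n)
    (hk : k + Module.finrank ℝ (sympOrtho ω Wsub) = n)
    (hmem : ∀ t (i : Fin n), (i : ℕ) < k → A t i ∈ Wsub)
    (hspan : ∀ t, Submodule.span ℝ {v | ∃ i : Fin n, (i : ℕ) < k ∧ v = A t i} =
      Submodule.span ℝ (Set.range (A t)) ⊓ Wsub)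
    (hblock : ∀ t (i j : Fin n), (i : ℕ) < k → k ≤ (j : ℕ) → ω (A t i) (A' t j) = 0)
    (hWkinv : ∀ t, IsUnit (Matrix.of fun i j : Fin k =>
      ω (A t (Fin.castLE hkn i)) (A' t (Fin.castLE hkn j))))
    -- the projections onto 𝔥(t) and 𝔳(t) relative to V = 𝔥(t) ⊕ 𝔳(t) ⊕ h(t)
    (Ph Pv : ℝ → V →L[ℝ] V)
    (hPh1 : ∀ t (j : Fin n), (j : ℕ) < k → Ph t (A t j) = A t j)
    (hPh2 : ∀ t (j : Fin n), k ≤ (j : ℕ) → Ph t (A t j) = 0)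
    (hPh3 : ∀ t j, Ph t (H t j) = 0)
    (hPv1 : ∀ t (j : Fin n), (j : ℕ) < k → Pv t (A t j) = 0)
    (hPv2 : ∀ t (j : Fin n), k ≤ (j : ℕ) → Pv t (A t j) = A t j)
    (hPv3 : ∀ t j, Pv t (H t j) = 0)
    -- the matrix of P_𝔥(t)|_{ℓ(t)} in the basis (a_i(t))
    (C₁ : ℝ → Matrix (Fin n) (Fin n) ℝ)
    (hC1 : ∀ t j, Ph t (A t j) = ∑ i, C₁ t i j • A t i)
    -- the Wronskian matrix
    (W : ℝ → Matrix (Fin n) (Fin n) ℝ)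
    (hW : ∀ t i j, W t i j = ω (A t i) (A' t j)) :
    ∃ (Fh' : ℝ → V →L[ℝ] V) (C₂ : ℝ → Matrix (Fin n) (Fin n) ℝ),
      (∀ t, HasDerivAt (fun u => (Ph u).comp (F u)) (Fh' t) t) ∧
      (∀ t j, Fh' t (A t j) = -(Ph t (A t j))) ∧
      (∀ t j, Fh' t (H t j) = ∑ i, C₂ t i j • A t i + ∑ i, C₁ t i j • H t i) ∧
      (∀ t, (C₂ t * (W t)⁻¹).transpose = C₂ t * (W t)⁻¹) ∧
      (∀ t (j : Fin n), (j : ℕ) < k → ∑ i, C₂ t i j • A t i = Pv t (A' t j)) ∧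
      (∀ t (j : Fin n), k ≤ (j : ℕ) → ∑ i, C₂ t i j • A t i = -(Ph t (A' t j))) := by
  have hA'' : ∃ A'' : ℝ → Fin n → V, ∀ i t, HasDerivAt (fun s => A' s i) (A'' t i) t := by
    refine ⟨fun t i => deriv (fun s => A' s i) t, fun i t => ?_⟩
    have h1 : (fun s => A' s i) = deriv (fun s => A s i) := by
      funext s; exact (hA' i s).deriv.symm
    have h2 : ContDiff ℝ (1 + 1) (fun s => A s i) := (hA i).of_le (by
      have : ((1 : WithTop ℕ∞) + 1) = ((2 : ℕ∞) : WithTop ℕ∞) := by norm_num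
      rw [this]
      exact_mod_cast le_top)
    have h3 : ContDiff ℝ 1 (deriv (fun s => A s i)) := (contDiff_succ_iff_deriv.1 h2).2.2
    rw [← h1] at h3
    exact (h3.differentiable (by simp) t).hasDerivAt
  obtain ⟨A'', hA''⟩ := hA''
  have hsp := fun t => (hfan t).2
  -- derivatives of F
  have e1 : ∀ t i, F' t (A t i) = -A t i := by
    intro t i
    have h := (hFd t).clm_apply (hA' i t)
    simp only [hF0, hF1] at h
    have := h.unique (hasDerivAt_const t (0 : V))
    exact eq_neg_of_add_eq_zero_left this
  have e2 : ∀ t i, F' t (A' t i) = A' t i - F t (A'' t i) := by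
    intro t i
    have h := (hFd t).clm_apply (hA'' i t)
    simp only [hF1] at h
    have := h.unique (hA' i t)
    exact eq_sub_of_add_eq this
  have e3 : ∀ t i, A' t i = H t i + (1/2 : ℝ) • F t (A'' t i) := by
    intro t i
    rw [hH, e2]
    module
  -- G = Ph ∘ F
  have hG0 : ∀ t i, ((Ph t).comp (F t)) (A t i) = 0 := by
    intro t i; simp [hF0]
  have hG1 : ∀ t i, ((Ph t).comp (F t)) (A' t i) = if (i : ℕ) < k then A t i else 0 := by
    intro t i
    split_ifs with h
    · simp [hF1, hPh1 t i h]
    · simp [hF1, hPh2 t i (not_lt.1 h)]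
  have hGd := aux_diff k A A' A'' hA' hA'' hfan (fun t => (Ph t).comp (F t)) hG0 hG1
  obtain ⟨G', hG'⟩ : ∃ G' : ℝ → V →L[ℝ] V,
      ∀ t, HasDerivAt (fun u => (Ph u).comp (F u)) (G' t) t :=
    ⟨_, fun t => (hGd t).hasDerivAt⟩
  have g1 : ∀ t j, G' t (A t j) = -(Ph t (A t j)) := by
    intro t i
    have h := (hG' t).clm_apply (hA' i t)
    simp only [hG0] at h
    have := h.unique (hasDerivAt_const t (0 : V))
    rw [eq_neg_of_add_eq_zero_left this]
    simp [hF1]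
  have g2 : ∀ t j, G' t (A' t j) = (if (j : ℕ) < k then A' t j else 0) - Ph t (F t (A'' t j)) := by
    intro t i
    have h := (hG' t).clm_apply (hA'' i t)
    simp only [hG1] at h
    apply eq_sub_of_add_eq
    refine h.unique ?_
    split_ifs with hi
    · exact hA' i t
    · exact hasDerivAt_const t (0 : V)
  have gF : ∀ t v, G' t (F t v) = -(Ph t (F t v)) := by
    intro t
    refine aux_ext (hsp t) ((G' t).comp (F t)).toLinearMap (-((Ph t).comp (F t))).toLinearMap ?_ ?_
    · intro i; simp [hF0]
    · intro i; simp [hF1, g1]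
  have sumF : ∀ t v, Ph t (F t v) + Pv t (F t v) = F t v := by
    intro t
    refine aux_ext (hsp t) ((Ph t).comp (F t) + (Pv t).comp (F t)).toLinearMap
      (F t).toLinearMap ?_ ?_
    · intro i; simp [hF0]
    · intro i
      rcases lt_or_ge (i : ℕ) k with h | h
      · simp [hF1, hPh1 t i h, hPv1 t i h]
      · simp [hF1, hPh2 t i h, hPv2 t i h]
  have memPh : ∀ t v, Ph t (F t v) ∈ Submodule.span ℝ (Set.range (A t)) := by
    intro t v
    have : (⊤ : Submodule ℝ V) ≤
        (Submodule.span ℝ (Set.range (A t))).comap ((Ph t).comp (F t)).toLinearMap := by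
      rw [← hsp t, Submodule.span_le]
      rintro _ ⟨i | i, rfl⟩
      · simp [hF0]
      · rcases lt_or_ge (i : ℕ) k with h | h
        · simpa [hF1, hPh1 t i h] using Submodule.subset_span (Set.mem_range_self (f := A t) i)
        · simp [hF1, hPh2 t i h]
    exact this (Submodule.mem_top (x := v))
  have memPv : ∀ t v, Pv t (F t v) ∈ Submodule.span ℝ (Set.range (A t)) := by
    intro t v
    have : (⊤ : Submodule ℝ V) ≤
        (Submodule.span ℝ (Set.range (A t))).comap ((Pv t).comp (F t)).toLinearMap := by
      rw [← hsp t, Submodule.span_le]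
      rintro _ ⟨i | i, rfl⟩
      · simp [hF0]
      · rcases lt_or_ge (i : ℕ) k with h | h
        · simp [hF1, hPv1 t i h]
        · simpa [hF1, hPv2 t i h] using Submodule.subset_span (Set.mem_range_self (f := A t) i)
    exact this (Submodule.mem_top (x := v))
  have PhA' : ∀ t j, Ph t (A' t j) = (1/2 : ℝ) • Ph t (F t (A'' t j)) := by
    intro t j
    conv_lhs => rw [e3 t j]
    simp [hPh3]
  have PvA' : ∀ t j, Pv t (A' t j) = (1/2 : ℝ) • Pv t (F t (A'' t j)) := by
    intro t j
    conv_lhs => rw [e3 t j]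
    simp [hPv3]
  have hC : ∀ t (j : Fin n), ∃ c : Fin n → ℝ,
      ∑ i, c i • A t i = if (j : ℕ) < k then Pv t (A' t j) else -(Ph t (A' t j)) := by
    intro t j
    rw [← Submodule.mem_span_range_iff_exists_fun]
    split_ifs
    · rw [PvA']; exact Submodule.smul_mem _ _ (memPv t _)
    · rw [PhA']; exact Submodule.neg_mem _ (Submodule.smul_mem _ _ (memPh t _))
  choose c hc using hC
  have c1 : ∀ t (j : Fin n), (j : ℕ) < k → ∑ i, c t j i • A t i = Pv t (A' t j) := by
    intro t j h; rw [hc, if_pos h]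
  have c2 : ∀ t (j : Fin n), k ≤ (j : ℕ) → ∑ i, c t j i • A t i = -(Ph t (A' t j)) := by
    intro t j h; rw [hc, if_neg (not_lt.2 h)]
  have hli : ∀ t, LinearIndependent ℝ (A t) := by
    intro t
    have := (hfan t).1.comp Sum.inl Sum.inl_injective
    simpa using this
  have hC1' : ∀ t j, ∑ i, C₁ t i j • H t i = if (j : ℕ) < k then H t j else 0 := by
    intro t j
    have key : ∀ i, C₁ t i j = if i = j ∧ (j : ℕ) < k then 1 else 0 := by
      intro i
      have h := Fintype.linearIndependent_iff.1 (hli t)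
        (fun i => C₁ t i j - if i = j ∧ (j : ℕ) < k then 1 else 0) (by
          simp only [sub_smul, Finset.sum_sub_distrib, ← hC1]
          rcases lt_or_ge (j : ℕ) k with h | h
          · simp [h, hPh1 t j h]
          · simp [not_lt.2 h, hPh2 t j h]) i
      exact sub_eq_zero.1 h
    simp only [key]
    rcases lt_or_ge (j : ℕ) k with h | h
    · simp [h]
    · simp [not_lt.2 h]
  -- the symplectic part
  have hskew : ∀ u v, ω u v = -ω v u := by
    intro u v
    have := halt (u + v)
    simp only [map_add, LinearMap.add_apply, halt] at this
    linarith
  let ωc : V →L[ℝ] V →L[ℝ] ℝ := LinearMap.toContinuousLinearMap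
    ((LinearMap.toContinuousLinearMap : (V →ₗ[ℝ] ℝ) ≃ₗ[ℝ] (V →L[ℝ] ℝ)).toLinearMap ∘ₗ ω)
  have hωc : ∀ u v, ωc u v = ω u v := fun u v => rfl
  have hωd : ∀ (f g : ℝ → V) (f' g' : V) (t : ℝ), HasDerivAt f f' t → HasDerivAt g g' t →
      HasDerivAt (fun s => ω (f s) (g s)) (ω f' (g t) + ω (f t) g') t := by
    intro f g f' g' t hf hg
    exact (ωc.hasFDerivAt.comp_hasDerivAt t hf).clm_apply hg
  have Wsym : ∀ t i j, ω (A t i) (A' t j) = ω (A t j) (A' t i) := by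
    intro t i j
    have h := hωd _ _ _ _ t (hA' i t) (hA' j t)
    simp only [hLag] at h
    have := h.unique (hasDerivAt_const t (0 : ℝ))
    have h2 := hskew (A' t i) (A t j)
    linarith
  have hFω : ∀ t j v, ω (A t j) v = ω (F t v) (A' t j) := by
    intro t j
    refine aux_ext (hsp t) (ω (A t j)) ((ω.flip (A' t j)) ∘ₗ (F t).toLinearMap) ?_ ?_
    · intro i; simp [hF0, hLag]
    · intro i; simpa [hF1] using Wsym t j i
  have hblock' : ∀ t (i j : Fin n), (i : ℕ) < k → k ≤ (j : ℕ) → ω (A t j) (A' t i) = 0 := by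
    intro t i j hi hj
    rw [Wsym, hblock t i j hi hj]
  have d1 : ∀ t (i j : Fin n), (i : ℕ) < k → k ≤ (j : ℕ) →
      ω (A' t i) (A' t j) + ω (A t i) (A'' t j) = 0 := by
    intro t i j hi hj
    have h := hωd _ _ _ _ t (hA' i t) (hA'' j t)
    simp only [hblock _ i j hi hj] at h
    exact h.unique (hasDerivAt_const t (0 : ℝ))
  have d2 : ∀ t (i j : Fin n), (i : ℕ) < k → k ≤ (j : ℕ) →
      ω (A' t j) (A' t i) + ω (A t j) (A'' t i) = 0 := by
    intro t i j hi hj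
    have h := hωd _ _ _ _ t (hA' j t) (hA'' i t)
    simp only [hblock' _ i j hi hj] at h
    exact h.unique (hasDerivAt_const t (0 : ℝ))
  have oPh : ∀ t (j : Fin n), k ≤ (j : ℕ) → ∀ v, ω (Ph t (F t v)) (A' t j) = 0 := by
    intro t j hj
    refine aux_ext (hsp t) ((ω.flip (A' t j)) ∘ₗ ((Ph t).comp (F t)).toLinearMap) 0 ?_ ?_
    · intro i; simp [hF0]
    · intro i
      rcases lt_or_ge (i : ℕ) k with h | h
      · simp [hF1, hPh1 t i h, hblock t i j h hj]
      · simp [hF1, hPh2 t i h]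
  have oPv : ∀ t (j : Fin n), (j : ℕ) < k → ∀ v, ω (Pv t (F t v)) (A' t j) = 0 := by
    intro t j hj
    refine aux_ext (hsp t) ((ω.flip (A' t j)) ∘ₗ ((Pv t).comp (F t)).toLinearMap) 0 ?_ ?_
    · intro i; simp [hF0]
    · intro i
      rcases lt_or_ge (i : ℕ) k with h | h
      · simp [hF1, hPv1 t i h]
      · simp [hF1, hPv2 t i h, hblock' t j i hj h]
  have cross : ∀ t (i j : Fin n), (i : ℕ) < k → k ≤ (j : ℕ) →
      ω (Pv t (A' t i)) (A' t j) = ω (-(Ph t (A' t j))) (A' t i) := by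
    intro t i j hi hj
    have h1 := d1 t i j hi hj
    have h2 := d2 t i j hi hj
    rw [hFω, ← sumF, map_add, LinearMap.add_apply, oPv t i hi] at h1
    rw [hFω, ← sumF, map_add, LinearMap.add_apply, oPh t j hj] at h2
    have h3 := hskew (A' t i) (A' t j)
    rw [PvA', PhA']
    simp only [map_neg, map_smul, LinearMap.neg_apply, LinearMap.smul_apply, smul_eq_mul]
    linarith
  let C₂ : ℝ → Matrix (Fin n) (Fin n) ℝ := fun t => Matrix.of fun i j => c t j i
  have WC : ∀ t i j, (W t * C₂ t) i j = ω (∑ l, c t j l • A t l) (A' t i) := by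
    intro t i j
    simp only [Matrix.mul_apply, C₂, Matrix.of_apply, hW, map_sum, map_smul,
      LinearMap.sum_apply, LinearMap.smul_apply, smul_eq_mul]
    refine Finset.sum_congr rfl fun l _ => ?_
    rw [Wsym t i l]; ring
  have Wt : ∀ t, (W t).transpose = W t := by
    intro t; ext i j; simp only [Matrix.transpose_apply, hW]; exact Wsym t j i
  have WCsym : ∀ t, (W t * C₂ t).transpose = W t * C₂ t := by
    intro t
    ext i j
    rw [Matrix.transpose_apply, WC, WC]
    rcases lt_or_ge (i : ℕ) k with hi | hi <;> rcases lt_or_ge (j : ℕ) k with hj | hj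
    · rw [c1 t i hi, c1 t j hj, PvA', PvA']; simp [oPv t i hi, oPv t j hj]
    · rw [c1 t i hi, c2 t j hj]; exact cross t i j hi hj
    · rw [c2 t i hi, c1 t j hj]; exact (cross t j i hj hi).symm
    · rw [c2 t i hi, c2 t j hj, PhA', PhA']; simp [oPh t i hi, oPh t j hj]
  refine ⟨G', C₂, hG', g1, ?_, ?_, c1, c2⟩
  · intro t j
    have hHj : H t j = A' t j - (1/2 : ℝ) • F t (A'' t j) := by
      rw [e3 t j]; abel
    have hL : G' t (H t j) = (if (j : ℕ) < k then A' t j else 0)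
        - (1/2 : ℝ) • Ph t (F t (A'' t j)) := by
      rw [hHj, map_sub, map_smul, g2, gF]
      module
    rw [hL, hC1']
    simp only [C₂, Matrix.of_apply]
    rw [hc]
    split_ifs with h
    · rw [PvA', hHj]
      rw [eq_sub_of_add_eq' (sumF t (A'' t j))]
      module
    · rw [PhA']; module
  · intro t
    by_cases hu : IsUnit (W t).det
    · have h1 : C₂ t * (W t)⁻¹ = (W t)⁻¹ * (W t * C₂ t) * (W t)⁻¹ := by
        rw [← Matrix.mul_assoc, Matrix.nonsing_inv_mul _ hu, Matrix.one_mul]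
      rw [h1, Matrix.transpose_mul, Matrix.transpose_mul, WCsym, Matrix.transpose_nonsing_inv, Wt,
        Matrix.mul_assoc (W t)⁻¹]
    · rw [Matrix.nonsing_inv_apply_not_isUnit _ hu]; simp
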